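/- arXiv:2512.14378 — 2 statements merged into one kernel-verified Lean document; each statement's English description precedes it below -/
import Mathlib

section
/- Let n ≥ 8 be divisible by 4 and let H be a saturated orthogonal array OA(n,n−1,2,2). Let X₀ be the n × (n(n−1)/2) design whose columns are the n−1 columns of H together with the interaction columns of all unordered pairs of distinct columns of H, and let X be obtained from X₀ by deleting any single column (either a column of H or an interaction column). Then E(s²)(X) = n²/(n+1), and X is E(s²)-optimal: E(s²)(X) ≤ E(s²)(Y) for every n × (n(n−1)/2 − 1) balanced two-level design Y. -/
open Finset

/-- The `E(s²)` value of an `n × m` two-level design `X` (columns indexed by `ι`,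
`m = card ι`): the average of the squared off-diagonal entries of `XᵀX`. -/
noncomputable def Es2 {n : ℕ} {ι : Type} [Fintype ι] [DecidableEq ι]
    (X : Fin n → ι → ℚ) : ℚ :=
  (∑ i : ι, ∑ j : ι, if i ≠ j then (∑ r : Fin n, X r i * X r j) ^ 2 else 0) /
    ((Fintype.card ι : ℚ) * ((Fintype.card ι : ℚ) - 1))

/-!
Let `m = n(n-1)/2 - 1`. The Gram matrices `XᵀX` and `XXᵀ` have the same sum of squares, and balance
makes the rows of `XXᵀ` sum to zero, so completing the square turns `E(s²)(X)` into `n²/(n+1)` plus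
a positive multiple of `∑_{r ≠ s} ((xᵣ ⬝ xₛ + n/2)² - 1)`, where `xᵣ` is the `r`-th row of `X`.

For a balanced two-level design with `m` columns, `n` is even and `xᵣ ⬝ xₛ ≡ m (mod 2)`, so
`xᵣ ⬝ xₛ + n/2` is an odd integer and every term of this sum is nonnegative.

A saturated array becomes a multiple of an orthogonal matrix once a column of ones is adjoined, so
its distinct rows have inner product `-1`. Hence distinct rows of the design with all interactions
have inner product `-n/2`, and deleting one column changes this by `±1`: every term vanishes.
-/

section Sums

variable {ι R : Type*} [Fintype ι]

theorem sum_sum_ite_ne [DecidableEq ι] [AddCommGroup R] (f : ι → ι → R) :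
    (∑ i, ∑ j, if i ≠ j then f i j else 0) = ∑ i, ∑ j, f i j - ∑ i, f i i := by
  rw [← sum_sub_distrib]
  refine sum_congr rfl fun i _ => ?_
  rw [← sum_filter, filter_ne, sum_erase_eq_sub (mem_univ i)]

theorem sq_sum_eq_sum_sq_add_two_mul_sum_lt [LinearOrder ι] [CommSemiring R] (f : ι → R) :
    (∑ i, f i) ^ 2 =
      ∑ i, f i ^ 2 + 2 * ∑ p : {p : ι × ι // p.1 < p.2}, f p.1.1 * f p.1.2 := by
  have sum_pairs : ∑ p : {p : ι × ι // p.1 < p.2}, f p.1.1 * f p.1.2 =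
      ∑ i, ∑ j, if i < j then f i * f j else 0 := by
    rw [← sum_product', univ_product_univ, ← sum_filter]
    exact (sum_subtype _ (by simp) fun p : ι × ι => f p.1 * f p.2).symm
  have sum_swap : (∑ i, ∑ j, if i < j then f i * f j else 0) =
      ∑ i, ∑ j, if j < i then f i * f j else 0 := by
    rw [sum_comm]
    simp_rw [mul_comm]
  have trichotomy (i j : ι) : f i * f j = (if i = j then f i * f j else 0) +
      ((if i < j then f i * f j else 0) + if j < i then f i * f j else 0) := by
    rcases lt_trichotomy i j with h | rfl | h
    · simp [h, h.ne, h.not_gt]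
    · simp
    · simp [h, h.ne', h.not_gt]
  calc (∑ i, f i) ^ 2 = ∑ i, ∑ j, f i * f j := by rw [sq, sum_mul_sum]
    _ = ∑ i, f i ^ 2 + ((∑ i, ∑ j, if i < j then f i * f j else 0) +
          ∑ i, ∑ j, if j < i then f i * f j else 0) := by
        rw [sum_congr rfl fun i _ => sum_congr rfl fun j _ => trichotomy i j]
        simp only [sum_add_distrib, sum_ite_eq, mem_univ, if_true, sq]
    _ = _ := by rw [← sum_swap, ← two_mul, sum_pairs]

theorem card_subtype_lt_prod [LinearOrder ι] :
    Fintype.card {p : ι × ι // p.1 < p.2} = (Fintype.card ι).choose 2 := by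
  have h := sq_sum_eq_sum_sq_add_two_mul_sum_lt fun _ : ι => (1 : ℚ)
  simp only [one_pow, mul_one, sum_const, card_univ, nsmul_eq_mul] at h
  have : (Fintype.card {p : ι × ι // p.1 < p.2} : ℚ) = (Fintype.card ι).choose 2 := by
    rw [Nat.cast_choose_two]
    linarith
  exact_mod_cast this

theorem exists_int_sum_eq_card_add_two_mul [Ring R] {f : ι → R} (hf : ∀ i, f i = 1 ∨ f i = -1) :
    ∃ k : ℤ, ∑ i, f i = Fintype.card ι + 2 * k := by
  have (i : ι) : ∃ k : ℤ, f i = 1 + 2 * k := by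
    rcases hf i with h | h
    · exact ⟨0, by simp [h]⟩
    · exact ⟨-1, by rw [h]; norm_num⟩
  choose k hk using this
  refine ⟨∑ i, k i, ?_⟩
  simp [hk, sum_add_distrib, ← mul_sum]

theorem even_card_of_sum_eq_zero [Ring R] [CharZero R] {f : ι → R}
    (hf : ∀ i, f i = 1 ∨ f i = -1) (hsum : ∑ i, f i = 0) : Even (Fintype.card ι) := by
  obtain ⟨k, hk⟩ := exists_int_sum_eq_card_add_two_mul hf
  have : (Fintype.card ι : ℤ) + 2 * k = 0 := by exact_mod_cast hk.symm.trans hsum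
  exact Nat.even_iff.mpr (by omega)

end Sums

section Gram

variable {ρ ι R : Type*} [Fintype ρ] [Fintype ι]

theorem trace_mul_transpose_self [Semiring R] (A : Matrix ρ ι R) :
    (A * A.transpose).trace = ∑ r, ∑ i, A r i ^ 2 := by
  simp only [Matrix.trace, Matrix.diag_apply, Matrix.mul_apply, Matrix.transpose_apply, sq]

theorem sum_sq_transpose_mul_self [CommSemiring R] (A : Matrix ρ ι R) :
    ∑ i, ∑ j, (A.transpose * A) i j ^ 2 = ∑ r, ∑ s, (A * A.transpose) r s ^ 2 := by
  rw [← trace_mul_transpose_self, ← trace_mul_transpose_self, Matrix.transpose_mul,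
    Matrix.transpose_mul, Matrix.transpose_transpose, Matrix.mul_assoc, Matrix.trace_mul_comm]
  simp only [Matrix.mul_assoc]

theorem mul_transpose_eq_smul_one [Field R] [DecidableEq ρ] [DecidableEq ι]
    (hcard : Fintype.card ρ = Fintype.card ι) {A : Matrix ρ ι R} {c : R} (hc : c ≠ 0)
    (hA : A.transpose * A = c • 1) : A * A.transpose = c • 1 := by
  have hinv : (c⁻¹ • A.transpose) * A = 1 := by
    rw [Matrix.smul_mul, hA, inv_smul_smul₀ hc]
  have := (Matrix.mul_eq_one_comm_of_card_eq _ _ _ hcard.symm).mp hinv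
  rw [← this, Matrix.mul_smul, smul_inv_smul₀ hc]

end Gram

/-- A two-level design, with runs indexed by `ρ` and columns by `ι`. -/
def IsTwoLevel {ρ ι : Type*} (X : ρ → ι → ℚ) : Prop :=
  ∀ r i, X r i = 1 ∨ X r i = -1

/-- A balanced design: the levels `1` and `-1` occur equally often in each column. -/
def IsBalanced {ρ ι : Type*} [Fintype ρ] (X : ρ → ι → ℚ) : Prop :=
  ∀ i, ∑ r, X r i = 0

/-- A two-level orthogonal array of strength two, described by its columns being balanced and
pairwise orthogonal. -/
structure IsOrthogonalArray {ρ ι : Type*} [Fintype ρ] (H : ρ → ι → ℚ) : Prop where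
  isTwoLevel : IsTwoLevel H
  isBalanced : IsBalanced H
  orthogonal : ∀ i j, i ≠ j → ∑ r, H r i * H r j = 0

/-- The design `H` augmented with the interaction columns of all unordered pairs of its columns,
an unordered pair being encoded as an increasing ordered one. -/
def withInteractions {ρ ι : Type*} [LinearOrder ι] (H : ρ → ι → ℚ) :
    ρ → ι ⊕ {p : ι × ι // p.1 < p.2} → ℚ :=
  fun r => Sum.elim (H r) fun p => H r p.1.1 * H r p.1.2

section Designs

variable {ρ ι : Type*} {X : ρ → ι → ℚ}

theorem IsTwoLevel.mul_self (hX : IsTwoLevel X) (r : ρ) (i : ι) : X r i * X r i = 1 :=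
  mul_self_eq_one_iff.mpr (hX r i)

theorem IsTwoLevel.mul_eq_one_or (hX : IsTwoLevel X) (r s : ρ) (i j : ι) :
    X r i * X s j = 1 ∨ X r i * X s j = -1 := by
  rcases hX r i with h | h <;> rcases hX s j with h' | h' <;> simp [h, h']

theorem IsTwoLevel.dotProduct_self [Fintype ι] (hX : IsTwoLevel X) (r : ρ) :
    X r ⬝ᵥ X r = Fintype.card ι := by
  simp [dotProduct, hX.mul_self]

variable [Fintype ρ]

theorem IsBalanced.even_card (hbal : IsBalanced X) (hX : IsTwoLevel X) [Nonempty ι] :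
    Even (Fintype.card ρ) :=
  let ⟨i⟩ := ‹Nonempty ι›
  even_card_of_sum_eq_zero (fun r => hX r i) (hbal i)

theorem IsBalanced.sum_dotProduct [Fintype ι] (hbal : IsBalanced X) (r : ρ) :
    ∑ s, X r ⬝ᵥ X s = 0 := by
  simp only [dotProduct]
  rw [sum_comm]
  exact sum_eq_zero fun i _ => by rw [← mul_sum, hbal, mul_zero]

theorem IsBalanced.sum_sq_dotProduct_add [Fintype ι] (hbal : IsBalanced X) (t : ℚ) :
    ∑ r, ∑ s, (X r ⬝ᵥ X s + t) ^ 2 =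
      ∑ r, ∑ s, (X r ⬝ᵥ X s) ^ 2 + (Fintype.card ρ * t) ^ 2 := by
  simp only [add_sq, sum_add_distrib, ← sum_mul, ← mul_sum, hbal.sum_dotProduct, sum_const,
    card_univ, nsmul_eq_mul]
  ring

theorem IsBalanced.sum_sq_offDiag [Fintype ι] [DecidableEq ι] [DecidableEq ρ]
    (hbal : IsBalanced X) (hX : IsTwoLevel X) (t : ℚ) :
    (∑ i, ∑ j, if i ≠ j then (∑ r, X r i * X r j) ^ 2 else 0) =
      (∑ r, ∑ s, if r ≠ s then (X r ⬝ᵥ X s + t) ^ 2 else 0) +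
        Fintype.card ρ * (Fintype.card ι + t) ^ 2 - (Fintype.card ρ * t) ^ 2 -
          Fintype.card ι * Fintype.card ρ ^ 2 := by
  have gram_swap : ∑ i, ∑ j, (∑ r, X r i * X r j) ^ 2 = ∑ r, ∑ s, (X r ⬝ᵥ X s) ^ 2 :=
    sum_sq_transpose_mul_self (Matrix.of X)
  rw [sum_sum_ite_ne, sum_sum_ite_ne, hbal.sum_sq_dotProduct_add, gram_swap]
  simp only [hX.mul_self, hX.dotProduct_self, sum_const, card_univ, nsmul_eq_mul, mul_one]
  ring

end Designs

section Optimality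

variable {n : ℕ} {ι : Type} [Fintype ι] {X : Fin n → ι → ℚ}

theorem cast_card_of_add_one_eq_choose_two (hι : Fintype.card ι + 1 = n.choose 2) :
    (Fintype.card ι : ℚ) = n * (n - 1) / 2 - 1 := by
  rw [← Nat.cast_choose_two, ← hι]
  simp

theorem one_lt_card_of_add_one_eq_choose_two (hn : 2 < n) (hι : Fintype.card ι + 1 = n.choose 2) :
    1 < Fintype.card ι := by
  have := Nat.choose_le_choose 2 hn
  simp only [Nat.reduceAdd, Nat.choose_succ_self_right] at this
  omega

theorem card_mul_card_sub_one_pos (hι : 1 < Fintype.card ι) :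
    (0 : ℚ) < Fintype.card ι * (Fintype.card ι - 1) := by
  have : (1 : ℚ) < Fintype.card ι := by exact_mod_cast hι
  exact mul_pos (by linarith) (by linarith)

theorem Es2_eq_add [DecidableEq ι] (hX : IsTwoLevel X) (hbal : IsBalanced X) (hn : 2 < n)
    (hι : Fintype.card ι + 1 = n.choose 2) :
    Es2 X = n ^ 2 / (n + 1) +
      (∑ r, ∑ s, if r ≠ s then (X r ⬝ᵥ X s + n / 2) ^ 2 - 1 else 0) /
        (Fintype.card ι * (Fintype.card ι - 1)) := by
  have hpos := card_mul_card_sub_one_pos (one_lt_card_of_add_one_eq_choose_two hn hι)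
  have excess : (∑ r, ∑ s, if r ≠ s then (X r ⬝ᵥ X s + n / 2) ^ 2 - 1 else 0) =
      (∑ r, ∑ s, if r ≠ s then (X r ⬝ᵥ X s + n / 2) ^ 2 else 0) - n * (n - 1 : ℚ) := by
    simp only [sum_sum_ite_ne, sum_sub_distrib, sum_const, card_univ, Fintype.card_fin,
      nsmul_eq_mul]
    ring
  rw [Es2, hbal.sum_sq_offDiag hX (n / 2), excess, Fintype.card_fin,
    div_add_div _ _ (by positivity) hpos.ne', div_eq_div_iff hpos.ne' (by positivity),
    cast_card_of_add_one_eq_choose_two hι]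
  ring

theorem Es2_eq_of_sq_dotProduct_add_eq_one [DecidableEq ι] (hX : IsTwoLevel X)
    (hbal : IsBalanced X) (hn : 2 < n) (hι : Fintype.card ι + 1 = n.choose 2)
    (hrow : ∀ r s, r ≠ s → (X r ⬝ᵥ X s + n / 2) ^ 2 = 1) :
    Es2 X = n ^ 2 / (n + 1) := by
  have excess_eq_zero : (∑ r, ∑ s, if r ≠ s then (X r ⬝ᵥ X s + n / 2) ^ 2 - 1 else 0) = 0 :=
    sum_eq_zero fun r _ => sum_eq_zero fun s _ => by
      split_ifs with h
      · rw [hrow r s h, sub_self]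
      · rfl
  rw [Es2_eq_add hX hbal hn hι, excess_eq_zero, zero_div, add_zero]

theorem one_le_sq_dotProduct_add (hX : IsTwoLevel X) (hn : Even n)
    (hι : Fintype.card ι + 1 = n.choose 2) (r s : Fin n) : 1 ≤ (X r ⬝ᵥ X s + n / 2) ^ 2 := by
  obtain ⟨k, hk⟩ := exists_int_sum_eq_card_add_two_mul fun i => hX.mul_eq_one_or r s i i
  obtain ⟨a, rfl⟩ := hn
  have dotProduct_odd :
      X r ⬝ᵥ X s + (a + a : ℕ) / 2 = ((2 * ((a : ℤ) ^ 2 + k) - 1 : ℤ) : ℚ) := by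
    rw [dotProduct, hk, cast_card_of_add_one_eq_choose_two hι]
    push_cast
    ring
  have one_le_sq : 1 ≤ (2 * ((a : ℤ) ^ 2 + k) - 1) ^ 2 :=
    (one_le_sq_iff_one_le_abs _).mpr (Int.one_le_abs (by omega))
  rw [dotProduct_odd]
  exact_mod_cast one_le_sq

theorem div_le_Es2 [DecidableEq ι] (hX : IsTwoLevel X) (hbal : IsBalanced X) (hn : 2 < n)
    (hι : Fintype.card ι + 1 = n.choose 2) : n ^ 2 / (n + 1) ≤ Es2 X := by
  have hcard := one_lt_card_of_add_one_eq_choose_two hn hι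
  have : Nonempty ι := Fintype.card_pos_iff.mp (by omega)
  have hn_even : Even n := by simpa using hbal.even_card hX
  rw [Es2_eq_add hX hbal hn hι]
  refine le_add_of_nonneg_right (div_nonneg ?_ (card_mul_card_sub_one_pos hcard).le)
  refine sum_nonneg fun r _ => sum_nonneg fun s _ => ?_
  split_ifs
  · exact sub_nonneg.mpr (one_le_sq_dotProduct_add hX hn_even hι r s)
  · rfl

end Optimality

section Interactions

variable {ρ ι : Type*} {H : ρ → ι → ℚ}

theorem IsOrthogonalArray.dotProduct_eq_neg_one [Fintype ρ] [Fintype ι]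
    (hH : IsOrthogonalArray H) (hcard : Fintype.card ι + 1 = Fintype.card ρ) {r s : ρ}
    (hrs : r ≠ s) : H r ⬝ᵥ H s = -1 := by
  classical
  let A : Matrix ρ (Option ι) ℚ := Matrix.of fun r c => c.elim 1 (H r)
  have hρ : (Fintype.card ρ : ℚ) ≠ 0 := by rw [← hcard]; positivity
  have columns : A.transpose * A = (Fintype.card ρ : ℚ) • 1 := by
    ext (_ | i) (_ | j)
    · simp [A, Matrix.mul_apply]
    · simp [A, Matrix.mul_apply, hH.isBalanced j]
    · simp [A, Matrix.mul_apply, hH.isBalanced i]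
    · by_cases h : i = j
      · simp [A, Matrix.mul_apply, h, hH.isTwoLevel.mul_self]
      · simp [A, Matrix.mul_apply, hH.orthogonal i j h, h]
  have rows := mul_transpose_eq_smul_one (by simp [hcard]) hρ columns
  have : 1 + H r ⬝ᵥ H s = 0 := by
    simpa [A, Matrix.mul_apply, Matrix.one_apply_ne hrs, dotProduct] using congrFun₂ rows r s
  linarith

variable [LinearOrder ι]

theorem isTwoLevel_withInteractions (hH : IsTwoLevel H) : IsTwoLevel (withInteractions H) := by
  rintro r (i | p)
  · exact hH r i
  · exact hH.mul_eq_one_or r r p.1.1 p.1.2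

theorem isBalanced_withInteractions [Fintype ρ] (hH : IsOrthogonalArray H) :
    IsBalanced (withInteractions H) := by
  rintro (i | p)
  · exact hH.isBalanced i
  · exact hH.orthogonal _ _ p.2.ne

variable [Fintype ι]

theorem IsTwoLevel.two_mul_dotProduct_withInteractions (hH : IsTwoLevel H) (r s : ρ) :
    2 * (withInteractions H r ⬝ᵥ withInteractions H s) =
      (H r ⬝ᵥ H s) ^ 2 + 2 * (H r ⬝ᵥ H s) - Fintype.card ι := by
  have sum_sq : ∑ i, (H r i * H s i) ^ 2 = Fintype.card ι := by
    simp [sq, mul_mul_mul_comm, hH.mul_self]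
  have h := sq_sum_eq_sum_sq_add_two_mul_sum_lt fun i => H r i * H s i
  rw [sum_sq] at h
  simp only [dotProduct, withInteractions, Fintype.sum_sum_type, Sum.elim_inl, Sum.elim_inr,
    mul_mul_mul_comm (H r _) (H r _)]
  linarith

theorem IsOrthogonalArray.dotProduct_withInteractions [Fintype ρ] (hH : IsOrthogonalArray H)
    (hcard : Fintype.card ι + 1 = Fintype.card ρ) {r s : ρ} (hrs : r ≠ s) :
    withInteractions H r ⬝ᵥ withInteractions H s = -(Fintype.card ρ / 2) := by
  have h := hH.isTwoLevel.two_mul_dotProduct_withInteractions r s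
  rw [hH.dotProduct_eq_neg_one hcard hrs] at h
  rw [← hcard]
  push_cast
  linarith

theorem IsOrthogonalArray.sq_dotProduct_delete [Fintype ρ] (hH : IsOrthogonalArray H)
    (hcard : Fintype.card ι + 1 = Fintype.card ρ) (c₀ : ι ⊕ {p : ι × ι // p.1 < p.2}) {r s : ρ}
    (hrs : r ≠ s) :
    (∑ c : {c // c ≠ c₀}, withInteractions H r c * withInteractions H s c +
      (Fintype.card ρ : ℚ) / 2) ^ 2 = 1 := by
  have total := hH.dotProduct_withInteractions hcard hrs
  rw [dotProduct, Fintype.sum_eq_add_sum_subtype_ne _ c₀] at total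
  have deleted : ∑ c : {c // c ≠ c₀}, withInteractions H r c * withInteractions H s c +
      (Fintype.card ρ : ℚ) / 2 = -(withInteractions H r c₀ * withInteractions H s c₀) := by
    linarith
  rw [deleted, neg_sq]
  exact sq_eq_one_iff.mpr ((isTwoLevel_withInteractions hH.isTwoLevel).mul_eq_one_or r s c₀ c₀)

theorem card_subtype_ne_sum_lt_prod (c₀ : ι ⊕ {p : ι × ι // p.1 < p.2}) :
    Fintype.card {c // c ≠ c₀} + 1 = (Fintype.card ι + 1).choose 2 := by
  have : 0 < Fintype.card (ι ⊕ {p : ι × ι // p.1 < p.2}) := Fintype.card_pos_iff.mpr ⟨c₀⟩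
  rw [Fintype.card_subtype_compl, Fintype.card_subtype_eq, Nat.sub_add_cancel this,
    Fintype.card_sum, card_subtype_lt_prod, Nat.choose_succ_succ, Nat.choose_one_right]

end Interactions

theorem Es2_optimal_full_minus_one_col_general {n : ℕ} (hn : 2 < n) {ι : Type} [Fintype ι]
    [LinearOrder ι] (hι : Fintype.card ι + 1 = n) {H : Fin n → ι → ℚ} (hH : IsOrthogonalArray H)
    (c₀ : ι ⊕ {p : ι × ι // p.1 < p.2}) :
    Es2 (fun r (c : {c // c ≠ c₀}) => withInteractions H r c) = n ^ 2 / (n + 1) ∧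
      ∀ {κ : Type} [Fintype κ] [DecidableEq κ] (Y : Fin n → κ → ℚ),
        Fintype.card κ + 1 = n.choose 2 → IsTwoLevel Y → IsBalanced Y →
          Es2 (fun r (c : {c // c ≠ c₀}) => withInteractions H r c) ≤ Es2 Y := by
  have value : Es2 (fun r (c : {c // c ≠ c₀}) => withInteractions H r c) = n ^ 2 / (n + 1) := by
    refine Es2_eq_of_sq_dotProduct_add_eq_one
      (fun r c => isTwoLevel_withInteractions hH.isTwoLevel r c)
      (fun c => isBalanced_withInteractions hH c) hn ?_ fun r s hrs => ?_
    · rw [card_subtype_ne_sum_lt_prod, hι]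
    · simpa [dotProduct] using hH.sq_dotProduct_delete (by simpa using hι) c₀ hrs
  exact ⟨value, fun Y hκ hY hbal => value ▸ div_le_Es2 hY hbal hn hκ⟩

/-- Deleting any single column (a main-effect or an interaction column)
from the `n × (n(n-1)/2)` design obtained by augmenting a saturated `OA(n, n-1, 2, 2)`
with all its two-column interactions yields a design `X` with `E(s²)(X) = n²/(n+1)`,
which is `E(s²)`-optimal among all balanced `n × (n(n-1)/2 - 1)` two-level designs. -/
theorem Es2_optimal_full_minus_one_col (n : ℕ) (hn : 8 ≤ n) (h4 : 4 ∣ n)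
    (H : Fin n → Fin (n - 1) → ℚ)
    (hpm : ∀ i j, H i j = 1 ∨ H i j = -1)
    (hbal : ∀ j, ∑ i : Fin n, H i j = 0)
    (horth : ∀ j k : Fin (n - 1), j ≠ k → ∑ i : Fin n, H i j * H i k = 0)
    (c0 : Fin (n - 1) ⊕ {p : Fin (n - 1) × Fin (n - 1) // p.1 < p.2})
    (X : Fin n →
      {c : Fin (n - 1) ⊕ {p : Fin (n - 1) × Fin (n - 1) // p.1 < p.2} // c ≠ c0} → ℚ)
    (hX : ∀ r c, X r c =
      Sum.elim (fun j => H r j) (fun p => H r p.1.1 * H r p.1.2) c.1) :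
    Es2 X = (n : ℚ) ^ 2 / ((n : ℚ) + 1) ∧
      ∀ Y : Fin n → Fin (n * (n - 1) / 2 - 1) → ℚ,
        (∀ i j, Y i j = 1 ∨ Y i j = -1) → (∀ j, ∑ i : Fin n, Y i j = 0) →
          Es2 X ≤ Es2 Y := by
  obtain rfl : X = fun r c => withInteractions H r c.1 := funext₂ hX
  obtain ⟨value, optimal⟩ := Es2_optimal_full_minus_one_col_general (by omega : 2 < n)
    (by rw [Fintype.card_fin]; omega) ⟨hpm, hbal, horth⟩ c0
  refine ⟨value, fun Y hY hYbal => optimal Y ?_ hY hYbal⟩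
  rw [Fintype.card_fin, ← Nat.choose_two_right, Nat.sub_add_cancel (Nat.choose_pos (by omega))]
end

section
/- Let n ≥ 12 be divisible by 4, let H be a saturated orthogonal array OA(n,n−1,2,2), let H' be the n×(n−2) design obtained from H by deleting one fixed column, and let c_{i₀} be a fixed column of H'. Let X be the n × (2n−5) two-level design whose columns are the n−2 columns of H' together with the n−3 interaction columns of c_{i₀} with each other column of H'. Then E(s²)(X) = n²(n−4)/((2n−5)(n−3)). -/
/-!
Write `J(i, j, k)` for the sum over the runs of the product of columns `i`, `j`, `k` of `H`. Both
the columns of `H'` and the interaction columns of `c_{i₀}` are mutually orthogonal, so the only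
off-diagonal inner products of `X` are the `J(i₀, j, k)`. With a constant column adjoined, `H`
becomes a square matrix `M` with `Mᵀ M = n I`, hence `M Mᵀ = n I`, and Parseval's identity applied
to an interaction column gives `∑ₖ J(i₀, j, k)² = n²` for `j ≠ i₀`. Summing over the `n - 3`
remaining `j` gives `(n - 3) n²`, and by symmetry of `J` the terms lost with the deleted column
add up to another `n²`.
-/

open Finset

open scoped Matrix

section Design

variable {ι α β R : Type*} [Fintype ι] [CommRing R]

/-- The `J₃`-characteristic of the columns `i`, `j`, `k` of a design `D`: the sum of their
entrywise product. -/
def tripleSum (D : ι → α → R) (i j k : α) : R :=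
  ∑ r, D r i * D r j * D r k

/-- The sum of the squared off-diagonal entries of `XᵀX`, i.e. the numerator of `E(s²)`. -/
def offDiagGramSqSum [Fintype α] [DecidableEq α] (X : ι → α → R) : R :=
  ∑ i, ∑ j, if i ≠ j then (∑ r, X r i * X r j) ^ 2 else 0

/-- The design `H` with its column `c` removed. -/
def deleteColumn (H : ι → α → R) (c : α) : ι → {j : α // j ≠ c} → R :=
  fun r j => H r j

/-- The design `D` followed by the interaction columns of column `i` with each other column. -/
def augmentWithInteractions (D : ι → α → R) (i : α) : ι → α ⊕ {j : α // j ≠ i} → R :=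
  fun r => Sum.elim (D r) (fun j => D r i * D r j)

theorem tripleSum_right_comm (D : ι → α → R) (i j k : α) :
    tripleSum D i j k = tripleSum D i k j :=
  sum_congr rfl fun _ _ => mul_right_comm _ _ _

theorem interactions_pairwise_orthogonal {D : ι → α → R} {i : α}
    (hi : ∀ r, D r i * D r i = 1) (hD : Pairwise fun j k => ∑ r, D r j * D r k = 0) :
    Pairwise fun j k => ∑ r, D r i * D r j * (D r i * D r k) = 0 := by
  intro j k hjk
  simp_rw [mul_mul_mul_comm, hi, one_mul]
  exact hD hjk

variable [Fintype α] [Fintype β] [DecidableEq α] [DecidableEq β]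

theorem offDiagGramSqSum_eq_zero {X : ι → α → R}
    (hX : Pairwise fun i j => ∑ r, X r i * X r j = 0) : offDiagGramSqSum X = 0 := by
  refine sum_eq_zero fun i _ => sum_eq_zero fun j _ => ?_
  split_ifs with hij
  · rw [hX hij, sq, mul_zero]
  · rfl

theorem offDiagGramSqSum_sumElim (A : ι → α → R) (B : ι → β → R) :
    offDiagGramSqSum (fun r => Sum.elim (A r) (B r)) =
      offDiagGramSqSum A + offDiagGramSqSum B + 2 * ∑ j, ∑ k, (∑ r, B r j * A r k) ^ 2 := by
  have cross : ∑ k, ∑ j, (∑ r, A r k * B r j) ^ 2 = ∑ j, ∑ k, (∑ r, B r j * A r k) ^ 2 := by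
    rw [sum_comm]
    simp_rw [mul_comm]
  simp only [offDiagGramSqSum, Fintype.sum_sum_type, Sum.elim_inl, Sum.elim_inr, ne_eq,
    Sum.inl.injEq, Sum.inr.injEq, reduceCtorEq, not_false_eq_true, if_true, sum_add_distrib, cross]
  ring

theorem offDiagGramSqSum_augmentWithInteractions {D : ι → α → R} {i : α}
    (hi : ∀ r, D r i * D r i = 1) (hD : Pairwise fun j k => ∑ r, D r j * D r k = 0) :
    offDiagGramSqSum (augmentWithInteractions D i) =
      2 * ∑ j : {j // j ≠ i}, ∑ k, tripleSum D i j k ^ 2 := by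
  have hB : Pairwise fun j k : {j // j ≠ i} => ∑ r, D r i * D r j * (D r i * D r k) = 0 :=
    (interactions_pairwise_orthogonal hi hD).comp_of_injective Subtype.val_injective
  calc offDiagGramSqSum (augmentWithInteractions D i)
      = offDiagGramSqSum D + offDiagGramSqSum (fun r (j : {j // j ≠ i}) => D r i * D r j) +
          2 * ∑ j : {j // j ≠ i}, ∑ k, tripleSum D i j k ^ 2 := offDiagGramSqSum_sumElim _ _
    _ = 2 * ∑ j : {j // j ≠ i}, ∑ k, tripleSum D i j k ^ 2 := by
        rw [offDiagGramSqSum_eq_zero hD, offDiagGramSqSum_eq_zero hB, zero_add, zero_add]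

end Design

theorem mul_transpose_eq_smul_one_of_transpose_mul {m n K : Type*} [Fintype m] [Fintype n]
    [DecidableEq m] [DecidableEq n] [Field K] {M : Matrix m n K} {c : K}
    (hc : c ≠ 0) (hmn : Fintype.card m = Fintype.card n) (hM : Mᵀ * M = c • 1) :
    M * Mᵀ = c • 1 := by
  have left_inv : (c⁻¹ • Mᵀ) * M = 1 := by
    rw [Matrix.smul_mul, hM, inv_smul_smul₀ hc]
  have right_inv := (Matrix.mul_eq_one_comm_of_card_eq _ _ _ hmn.symm).mp left_inv
  rw [Matrix.mul_smul] at right_inv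
  exact (inv_smul_eq_iff₀ hc).mp right_inv

theorem sum_subtype_ne {α G : Type*} [Fintype α] [DecidableEq α] [AddCommGroup G] (f : α → G)
    (a : α) : ∑ i : {i // i ≠ a}, f i = ∑ i, f i - f a :=
  eq_sub_of_add_eq' (Fintype.sum_eq_add_sum_subtype_ne f a).symm

theorem cast_card_subtype_ne {α R : Type*} [Fintype α] [DecidableEq α] [Ring R] (a : α) :
    (Fintype.card {i // i ≠ a} : R) = Fintype.card α - 1 := by
  simpa using sum_subtype_ne (fun _ => (1 : R)) a

/-- `H` is a saturated orthogonal array `OA(n, n - 1, 2, 2)`, with runs indexed by `ι` and columns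
by `κ`. -/
structure IsSaturatedOA {ι κ R : Type*} [Fintype ι] [Fintype κ] [Ring R] (H : ι → κ → R) :
    Prop where
  card_eq : Fintype.card ι = Fintype.card κ + 1
  eq_one_or_neg_one : ∀ r j, H r j = 1 ∨ H r j = -1
  sum_eq_zero : ∀ j, ∑ r, H r j = 0
  orthogonal : Pairwise fun j k => ∑ r, H r j * H r k = 0

/-- The matrix whose columns are a constant column, at index `none`, and the columns of `H`. -/
def withConstantColumn {ι κ R : Type*} [One R] (H : ι → κ → R) : Matrix ι (Option κ) R :=
  Matrix.of fun r j => j.elim 1 (H r)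

namespace IsSaturatedOA

section Ring

variable {ι κ R : Type*} [Fintype ι] [Fintype κ] [CommRing R] {H : ι → κ → R}

theorem mul_self (hH : IsSaturatedOA H) (r : ι) (j : κ) : H r j * H r j = 1 := by
  rcases hH.eq_one_or_neg_one r j with h | h <;> simp [h]

theorem tripleSum_self_left (hH : IsSaturatedOA H) (i k : κ) : tripleSum H i i k = 0 := by
  simp_rw [tripleSum, hH.mul_self, one_mul, hH.sum_eq_zero]

theorem tripleSum_self_right (hH : IsSaturatedOA H) (i k : κ) : tripleSum H i k k = 0 := by
  simp_rw [tripleSum, mul_assoc, hH.mul_self, mul_one, hH.sum_eq_zero]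

theorem cast_card_columns (hH : IsSaturatedOA H) : (Fintype.card κ : R) = Fintype.card ι - 1 := by
  rw [hH.card_eq, Nat.cast_succ, add_sub_cancel_right]

theorem transpose_mul_withConstantColumn [DecidableEq κ] (hH : IsSaturatedOA H) :
    (withConstantColumn H)ᵀ * withConstantColumn H = (Fintype.card ι : R) • 1 := by
  ext (_ | j) (_ | k)
  · simp [withConstantColumn, Matrix.mul_apply]
  · simp [withConstantColumn, Matrix.mul_apply, hH.sum_eq_zero]
  · simp [withConstantColumn, Matrix.mul_apply, hH.sum_eq_zero]
  · obtain rfl | hjk := eq_or_ne j k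
    · simp [withConstantColumn, Matrix.mul_apply, hH.mul_self]
    · simp [withConstantColumn, Matrix.mul_apply, hH.orthogonal hjk, hjk]

end Ring

variable {ι κ K : Type*} [Fintype ι] [Fintype κ] [Field K] [CharZero K] {H : ι → κ → K}

theorem parseval (hH : IsSaturatedOA H) (v : ι → K) :
    (∑ r, v r) ^ 2 + ∑ k, (∑ r, v r * H r k) ^ 2 = Fintype.card ι * ∑ r, v r ^ 2 := by
  classical
  let M := withConstantColumn H
  have hcard : (Fintype.card ι : K) ≠ 0 := by
    rw [hH.card_eq]
    exact Nat.cast_ne_zero.mpr (Nat.succ_ne_zero _)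
  have hM : M * Mᵀ = (Fintype.card ι : K) • 1 :=
    mul_transpose_eq_smul_one_of_transpose_mul hcard (by rw [Fintype.card_option, hH.card_eq])
      hH.transpose_mul_withConstantColumn
  calc (∑ r, v r) ^ 2 + ∑ k, (∑ r, v r * H r k) ^ 2
      = (v ᵥ* M) ⬝ᵥ (v ᵥ* M) := by
        simp [dotProduct, Matrix.vecMul, M, withConstantColumn, sq]
    _ = (v ᵥ* (M * Mᵀ)) ⬝ᵥ v := by
        rw [← Matrix.vecMul_vecMul, Matrix.dotProduct_vecMul_transpose]
    _ = Fintype.card ι * ∑ r, v r ^ 2 := by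
        simp [hM, Matrix.vecMul_smul, dotProduct, sq, mul_sum, mul_assoc]

theorem sum_tripleSum_sq (hH : IsSaturatedOA H) {i j : κ} (hij : i ≠ j) :
    ∑ k, tripleSum H i j k ^ 2 = (Fintype.card ι : K) ^ 2 := by
  have interaction_sq (r : ι) : (H r i * H r j) ^ 2 = 1 := by
    rw [mul_pow, sq, sq, hH.mul_self, hH.mul_self, one_mul]
  have h := hH.parseval fun r => H r i * H r j
  simpa [tripleSum, hH.orthogonal hij, interaction_sq, ← sq] using h

variable [DecidableEq κ]

theorem sum_tripleSum_sq_deleted (hH : IsSaturatedOA H) {c : κ} (i : {j // j ≠ c}) :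
    ∑ j : {j : {j // j ≠ c} // j ≠ i}, tripleSum H i j c ^ 2 = (Fintype.card ι : K) ^ 2 := by
  rw [sum_subtype_ne (fun j : {j // j ≠ c} => tripleSum H i j c ^ 2),
    sum_subtype_ne (fun j => tripleSum H i j c ^ 2), hH.tripleSum_self_left,
    hH.tripleSum_self_right]
  simp_rw [tripleSum_right_comm H i.1 _ c]
  rw [hH.sum_tripleSum_sq i.2]
  ring

theorem sum_sum_tripleSum_sq_deleteColumn (hH : IsSaturatedOA H) (c : κ) (i : {j // j ≠ c}) :
    ∑ j : {j : {j // j ≠ c} // j ≠ i}, ∑ k : {k // k ≠ c}, tripleSum H i j k ^ 2 =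
      (Fintype.card ι : K) ^ 2 * (Fintype.card ι - 4) := by
  have row_sum (j : {j : {j // j ≠ c} // j ≠ i}) :
      ∑ k : {k // k ≠ c}, tripleSum H i j k ^ 2 =
        (Fintype.card ι : K) ^ 2 - tripleSum H i j c ^ 2 := by
    have hij : i.1 ≠ j.1.1 := fun h => j.2 (Subtype.ext h.symm)
    rw [sum_subtype_ne (fun k => tripleSum H i j k ^ 2), hH.sum_tripleSum_sq hij]
  simp_rw [row_sum]
  rw [sum_sub_distrib, hH.sum_tripleSum_sq_deleted, sum_const, card_univ, nsmul_eq_mul,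
    cast_card_subtype_ne, cast_card_subtype_ne, hH.cast_card_columns]
  ring

theorem offDiagGramSqSum_augment_deleteColumn (hH : IsSaturatedOA H) (c : κ) (i : {j // j ≠ c}) :
    offDiagGramSqSum (augmentWithInteractions (deleteColumn H c) i) =
      2 * ((Fintype.card ι : K) ^ 2 * (Fintype.card ι - 4)) := by
  have horth : Pairwise fun j k => ∑ r, deleteColumn H c r j * deleteColumn H c r k = 0 :=
    hH.orthogonal.comp_of_injective Subtype.val_injective
  calc offDiagGramSqSum (augmentWithInteractions (deleteColumn H c) i)
      = 2 * ∑ j : {j // j ≠ i}, ∑ k, tripleSum (deleteColumn H c) i j k ^ 2 :=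
        offDiagGramSqSum_augmentWithInteractions (fun r => hH.mul_self r i) horth
    _ = 2 * ((Fintype.card ι : K) ^ 2 * (Fintype.card ι - 4)) :=
        congrArg (2 * ·) (hH.sum_sum_tripleSum_sq_deleteColumn c i)

end IsSaturatedOA

theorem Es2_one_parent_delete_one_general {n : ℕ} {κ : Type} [Fintype κ] [DecidableEq κ]
    {H : Fin n → κ → ℚ} (hH : IsSaturatedOA H) (c : κ) (i : {j // j ≠ c}) :
    Es2 (augmentWithInteractions (deleteColumn H c) i) =
      (n : ℚ) ^ 2 * (n - 4) / ((2 * n - 5) * (n - 3)) := by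
  have hm : (Fintype.card ({j // j ≠ c} ⊕ {j // j ≠ i}) : ℚ) = 2 * n - 5 := by
    rw [Fintype.card_sum, Nat.cast_add, cast_card_subtype_ne, cast_card_subtype_ne,
      cast_card_subtype_ne, hH.cast_card_columns, Fintype.card_fin]
    ring
  have hnum := hH.offDiagGramSqSum_augment_deleteColumn c i
  rw [Fintype.card_fin] at hnum
  calc Es2 (augmentWithInteractions (deleteColumn H c) i)
      = 2 * ((n : ℚ) ^ 2 * (n - 4)) / ((2 * n - 5) * (2 * n - 5 - 1)) := by
        rw [← hnum, ← hm]
        rfl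
    _ = 2 * ((n : ℚ) ^ 2 * (n - 4)) / (2 * ((2 * n - 5) * (n - 3))) := by ring
    _ = (n : ℚ) ^ 2 * (n - 4) / ((2 * n - 5) * (n - 3)) := mul_div_mul_left _ _ two_ne_zero

/-- Let `H'` be a saturated `OA(n, n-1, 2, 2)` with one fixed column
deleted, and let `c_{i₀}` be a fixed column of `H'`. Augmenting `H'` with the `n-3`
interaction columns of `c_{i₀}` with each other column of `H'` yields an
`n × (2n-5)` design `X` with `E(s²)(X) = n²(n-4)/((2n-5)(n-3))`. -/
theorem Es2_one_parent_delete_one (n : ℕ) (hn : 12 ≤ n) (h4 : 4 ∣ n)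
    (H : Fin n → Fin (n - 1) → ℚ)
    (hpm : ∀ i j, H i j = 1 ∨ H i j = -1)
    (hbal : ∀ j, ∑ i : Fin n, H i j = 0)
    (horth : ∀ j k : Fin (n - 1), j ≠ k → ∑ i : Fin n, H i j * H i k = 0)
    (cdel : Fin (n - 1)) (i0 : {j : Fin (n - 1) // j ≠ cdel})
    (X : Fin n → ({j : Fin (n - 1) // j ≠ cdel} ⊕
      {j : {j : Fin (n - 1) // j ≠ cdel} // j ≠ i0}) → ℚ)
    (hX : ∀ r, X r = Sum.elim (fun j => H r j.1) (fun j => H r i0.1 * H r j.1.1)) :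
    Es2 X = (n : ℚ) ^ 2 * ((n : ℚ) - 4) / ((2 * (n : ℚ) - 5) * ((n : ℚ) - 3)) := by
  obtain rfl : X = augmentWithInteractions (deleteColumn H cdel) i0 := funext hX
  exact Es2_one_parent_delete_one_general
    ⟨by simp only [Fintype.card_fin]; omega, hpm, hbal, horth⟩ cdel i0
end
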